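/- Define Q*(L) = (2^{L+1} − 2)/3 when L is even and Q*(L) = (2^{L+1} − 4)/3 when L is odd. Then for every L ≥ 1, the sector dimension N_L(Q*(L)) equals the Fibonacci number Fib(L+1) (with Fib(1)=Fib(2)=1), and this sector is the largest: N_L(Q) ≤ Fib(L+1) for every charge Q. Consequently the largest Krylov sector of the spin-1 breakdown model grows as the golden ratio to the power L, which is an exponentially small fraction of the total Hilbert space dimension 3^L. -/

import Mathlib

/-!
Splitting off the site of weight `1` gives `Q(n) = n₀ + 2 Q(n')`, hence the recursion
`N_{L+1}(2q+1) = N_L(q)`, `N_{L+1}(2q+2) = N_L(q+1) + N_L(q)`, `N_{L+1}(0) = N_L(0)`.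

* Upper bound: of two consecutive charges one is odd, so `N_{L+1}(q) + N_{L+1}(q+1)` is a term
  of length `L` plus a term of length `L+1`. The pair of bounds `N_L(q) ≤ Fib(L+1)` and
  `N_L(q) + N_L(q+1) ≤ Fib(L+2)` therefore propagates by induction (`sectorDim_le_aux`).
* Equality: `Q*(L+1)` is `2 Q*(L)` for even `L` and `2 Q*(L) + 2` for odd `L`. Along this sequence
  the even recursion is applied at each step, and the odd one of the two neighbouring charges
  reduces to `Q*` two sizes below, so `N_{L+2}(Q*) = N_{L+1}(Q*) + N_L(Q*)`.
-/

/-- The charge of a spin-1 breakdown configuration `n : Fin L → Fin 3`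
(sites indexed `0, …, L-1`, so the site at index `i` carries weight `2^i`). -/
def breakdownCharge (L : ℕ) (n : Fin L → Fin 3) : ℕ :=
  ∑ i : Fin L, 2 ^ (i : ℕ) * (n i : ℕ)

/-- `sectorDim L Q` is the number of length-`L` configurations with charge `Q`,
i.e. the dimension of the Krylov sector `K_Q` of the spin-1 breakdown model. -/
def sectorDim (L Q : ℕ) : ℕ :=
  (Finset.univ.filter fun n : Fin L → Fin 3 => breakdownCharge L n = Q).card

/-- The charge of (one of) the largest Krylov sectors: `Q*(L) = (2^(L+1) - 2)/3`
for `L` even and `Q*(L) = (2^(L+1) - 4)/3` for `L` odd. -/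
def breakdownQstar (L : ℕ) : ℕ :=
  if L % 2 = 0 then (2 ^ (L + 1) - 2) / 3 else (2 ^ (L + 1) - 4) / 3

theorem breakdownCharge_cons (L : ℕ) (d : Fin 3) (n : Fin L → Fin 3) :
    breakdownCharge (L + 1) (Fin.cons d n) = d + 2 * breakdownCharge L n := by
  simp only [breakdownCharge, Fin.sum_univ_succ, Fin.cons_zero, Fin.cons_succ, Fin.val_zero,
    Fin.val_succ, pow_zero, one_mul, Finset.mul_sum]
  congr 1
  exact Finset.sum_congr rfl fun i _ => by ring

theorem sectorDim_eq_sum (L Q : ℕ) :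
    sectorDim L Q = ∑ n : Fin L → Fin 3, if breakdownCharge L n = Q then 1 else 0 :=
  Finset.card_filter _ _

/-- Counting configurations by the value at the site of weight `1`. -/
theorem sectorDim_succ (L Q : ℕ) :
    sectorDim (L + 1) Q =
      (∑ n : Fin L → Fin 3, if 2 * breakdownCharge L n = Q then 1 else 0) +
      (∑ n : Fin L → Fin 3, if 1 + 2 * breakdownCharge L n = Q then 1 else 0) +
      (∑ n : Fin L → Fin 3, if 2 + 2 * breakdownCharge L n = Q then 1 else 0) := by
  rw [sectorDim_eq_sum, ← (Fin.consEquiv fun _ : Fin (L + 1) => Fin 3).sum_comp,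
    Fintype.sum_prod_type, Fin.sum_univ_three]
  simp [Fin.consEquiv, breakdownCharge_cons]

theorem sectorDim_succ_odd (L q : ℕ) : sectorDim (L + 1) (2 * q + 1) = sectorDim L q := by
  have h0 (x : ℕ) : ¬ 2 * x = 2 * q + 1 := by omega
  have h1 (x : ℕ) : 1 + 2 * x = 2 * q + 1 ↔ x = q := by omega
  have h2 (x : ℕ) : ¬ 2 + 2 * x = 2 * q + 1 := by omega
  simp only [sectorDim_succ, sectorDim_eq_sum L, h0, h1, h2, if_false, Finset.sum_const_zero,
    zero_add, add_zero]

theorem sectorDim_succ_even (L q : ℕ) :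
    sectorDim (L + 1) (2 * q + 2) = sectorDim L (q + 1) + sectorDim L q := by
  have h0 (x : ℕ) : 2 * x = 2 * q + 2 ↔ x = q + 1 := by omega
  have h1 (x : ℕ) : ¬ 1 + 2 * x = 2 * q + 2 := by omega
  have h2 (x : ℕ) : 2 + 2 * x = 2 * q + 2 ↔ x = q := by omega
  simp only [sectorDim_succ, sectorDim_eq_sum L, h0, h1, h2, if_false, Finset.sum_const_zero,
    add_zero]

theorem sectorDim_succ_zero (L : ℕ) : sectorDim (L + 1) 0 = sectorDim L 0 := by
  have h0 (x : ℕ) : 2 * x = 0 ↔ x = 0 := by omega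
  have h1 (x : ℕ) : ¬ 1 + 2 * x = 0 := by omega
  have h2 (x : ℕ) : ¬ 2 + 2 * x = 0 := by omega
  simp only [sectorDim_succ, sectorDim_eq_sum L, h0, h1, h2, if_false, Finset.sum_const_zero,
    add_zero]

theorem sectorDim_zero (Q : ℕ) : sectorDim 0 Q = if Q = 0 then 1 else 0 := by
  simp [sectorDim_eq_sum, breakdownCharge, eq_comm]

/-- The bound on single sectors, strengthened by a bound on neighbouring pairs so that the
induction closes. -/
theorem sectorDim_le_aux (L : ℕ) :
    (∀ q, sectorDim L q ≤ Nat.fib (L + 1)) ∧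
      ∀ q, sectorDim L q + sectorDim L (q + 1) ≤ Nat.fib (L + 2) := by
  induction L with
  | zero =>
    refine ⟨fun q => ?_, fun q => ?_⟩ <;> simp only [sectorDim_zero]
    · split_ifs <;> simp
    · by_cases h : q = 0 <;> simp [h]
  | succ L ih =>
    obtain ⟨h1, h2⟩ := ih
    have hfib : Nat.fib (L + 3) = Nat.fib (L + 1) + Nat.fib (L + 2) := Nat.fib_add_two
    have hmono : Nat.fib (L + 1) ≤ Nat.fib (L + 2) := Nat.fib_mono (by omega)
    have hsingle (q : ℕ) : sectorDim (L + 1) q ≤ Nat.fib (L + 2) := by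
      obtain ⟨k, rfl | rfl⟩ := Nat.even_or_odd' q
      · cases k with
        | zero => exact (sectorDim_succ_zero L).trans_le ((h1 0).trans hmono)
        | succ k =>
          rw [mul_add, mul_one, sectorDim_succ_even, add_comm]
          exact h2 k
      · rw [sectorDim_succ_odd]
        exact (h1 k).trans hmono
    refine ⟨hsingle, fun q => ?_⟩
    change _ ≤ Nat.fib (L + 3)
    rw [hfib]
    obtain ⟨k, rfl | rfl⟩ := Nat.even_or_odd' q
    · have := hsingle (2 * k)
      have := h1 k
      rw [sectorDim_succ_odd]
      omega
    · have := hsingle (2 * k + 1 + 1)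
      have := h1 k
      rw [sectorDim_succ_odd]
      omega

theorem two_pow_mod_three (L : ℕ) : 2 ^ (L + 1) % 3 = if L % 2 = 0 then 2 else 1 := by
  induction L with
  | zero => rfl
  | succ L ih =>
    rw [pow_succ]
    split_ifs at ih ⊢ <;> omega

theorem breakdownQstar_succ (L : ℕ) :
    breakdownQstar (L + 1) = 2 * breakdownQstar L + if L % 2 = 0 then 0 else 2 := by
  have h := two_pow_mod_three L
  -- for odd `L` this keeps the truncated subtraction `2 ^ (L + 1) - 4` exact
  have h2 : 2 ≤ 2 ^ (L + 1) := Nat.le_self_pow (by omega) 2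
  unfold breakdownQstar
  rw [pow_succ 2 (L + 1)]
  split_ifs at h ⊢ <;> omega

theorem sectorDim_Qstar (L : ℕ) :
    sectorDim L (breakdownQstar L) = Nat.fib (L + 1) ∧
      sectorDim (L + 1) (breakdownQstar (L + 1)) = Nat.fib (L + 2) := by
  induction L with
  | zero => exact ⟨by decide, by decide⟩
  | succ L ih =>
    obtain ⟨h1, h2⟩ := ih
    refine ⟨h2, ?_⟩
    have hfib : Nat.fib (L + 3) = Nat.fib (L + 1) + Nat.fib (L + 2) := Nat.fib_add_two
    change sectorDim (L + 2) (breakdownQstar (L + 2)) = Nat.fib (L + 3)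
    have e1 := breakdownQstar_succ L
    have e2 := breakdownQstar_succ (L + 1)
    rw [hfib, ← h1, ← h2]
    rcases Nat.mod_two_eq_zero_or_one L with hL | hL
    · have hL' : (L + 1) % 2 ≠ 0 := by omega
      rw [if_pos hL, add_zero] at e1
      rw [if_neg hL'] at e2
      rw [e2, sectorDim_succ_even]
      congr 1
      rw [e1, sectorDim_succ_odd]
    · have hL' : (L + 1) % 2 = 0 := by omega
      rw [if_neg (by omega)] at e1
      rw [if_pos hL', add_zero] at e2
      have e3 : breakdownQstar (L + 2) = 2 * (2 * breakdownQstar L + 1) + 2 := by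
        rw [e2, e1]; ring
      rw [e3, sectorDim_succ_even, sectorDim_succ_odd, e1, add_comm]

/-- For every `L ≥ 1`, the Krylov sector of charge `Q*(L)` of the spin-1 breakdown
model has dimension equal to the Fibonacci number `Fib(L+1)` (with
`Fib 1 = Fib 2 = 1`), and it is the largest sector: `N_L(Q) ≤ Fib(L+1)` for every
charge `Q`.  (Hence the largest Krylov sector grows like the golden ratio to the
power `L`, an exponentially small fraction of the Hilbert space dimension `3^L`.) -/
theorem sectorDim_max_eq_fib (L : ℕ) (hL : 1 ≤ L) :
    sectorDim L (breakdownQstar L) = Nat.fib (L + 1) ∧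
      ∀ Q : ℕ, sectorDim L Q ≤ Nat.fib (L + 1) := by
  exact ⟨(sectorDim_Qstar L).1, (sectorDim_le_aux L).1⟩
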